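/- arXiv:1205.3454 — 7 statements merged into one kernel-verified Lean document; each statement's English description precedes it below -/
import Mathlib

section
/- Let S be an idempotent covered semigroup. Then E = {(s,e,σ) : e ∈ E(S), se = s} ∪ {(e,s,τ) : e ∈ E(S), e 𝓛 s}, where 𝓛 denotes Green's 𝓛-relation on S. -/
namespace SemibandEmbed

/-- The two-element right-zero semigroup `R₂ = {σ, τ}`. -/
inductive R2 : Type where
  | σ : R2
  | τ : R2
  deriving DecidableEq

section GreenDefs

variable {S : Type*} [Semigroup S]

/-- Green's relation 𝓡 : `a 𝓡 b` iff `a S¹ = b S¹` (inside `S¹ = WithOne S`). -/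
def greenR (a b : S) : Prop :=
  {x : WithOne S | ∃ u : WithOne S, x = (a : WithOne S) * u} =
    {x : WithOne S | ∃ u : WithOne S, x = (b : WithOne S) * u}

/-- Green's relation 𝓛 : `a 𝓛 b` iff `S¹ a = S¹ b`. -/
def greenL (a b : S) : Prop :=
  {x : WithOne S | ∃ u : WithOne S, x = u * (a : WithOne S)} =
    {x : WithOne S | ∃ u : WithOne S, x = u * (b : WithOne S)}

/-- Green's relation 𝓗 = 𝓛 ∩ 𝓡. -/
def greenH (a b : S) : Prop := greenL a b ∧ greenR a b

/-- Green's relation 𝓓 : `a 𝓓 b` iff `a 𝓡 c` and `c 𝓛 b` for some `c`. -/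
def greenD (a b : S) : Prop := ∃ c : S, greenR a c ∧ greenL c b

/-- Green's relation 𝓙 : `a 𝓙 b` iff `S¹ a S¹ = S¹ b S¹`. -/
def greenJ (a b : S) : Prop :=
  {x : WithOne S | ∃ u v : WithOne S, x = u * (a : WithOne S) * v} =
    {x : WithOne S | ∃ u v : WithOne S, x = u * (b : WithOne S) * v}

/-- Mitsch's natural partial order on a semigroup. -/
def natLe (a b : S) : Prop := ∃ x y : S, a = x * b ∧ a = b * y ∧ a = a * y

end GreenDefs

/-- A semigroup is idempotent covered if every element `s` satisfies `s e = s = f s`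
for some idempotents `e`, `f`. -/
def IdemCovered (S : Type*) [Semigroup S] : Prop :=
  ∀ s : S, ∃ e f : S, IsIdempotentElem e ∧ IsIdempotentElem f ∧ s * e = s ∧ f * s = s

/-- A semigroup is regular if every `a` satisfies `a x a = a` for some `x`. -/
def IsRegularSemigroup (S : Type*) [Semigroup S] : Prop :=
  ∀ a : S, ∃ x : S, a * x * a = a

/-- A semigroup is periodic if every element generates a finite monogenic subsemigroup,
i.e. `aᵐ = aⁿ` for some `0 < m < n` (powers computed in `S¹ = WithOne S`). -/
def IsPeriodic (S : Type*) [Semigroup S] : Prop :=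
  ∀ a : S, ∃ m n : ℕ, 0 < m ∧ m < n ∧ (a : WithOne S) ^ m = (a : WithOne S) ^ n

/-- `𝓗` is a left congruence. -/
def IsLeftCongH (S : Type*) [Semigroup S] : Prop :=
  ∀ a b c : S, greenH a b → greenH (c * a) (c * b)

/-- `𝓗` is a right congruence. -/
def IsRightCongH (S : Type*) [Semigroup S] : Prop :=
  ∀ a b c : S, greenH a b → greenH (a * c) (b * c)

/-- A semigroup is completely regular if every element is 𝓗-related to an idempotent. -/
def IsCompletelyRegular (S : Type*) [Semigroup S] : Prop :=
  ∀ a : S, ∃ e : S, IsIdempotentElem e ∧ greenH a e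

section SemidirectProduct

variable {S : Type*} [Semigroup S]

/-- The multiplication of the semidirect product `(S × S) * R₂`:
`(t₁,s₁,σ)·(t₂,s₂,α) = (t₁s₂, s₁s₂, α)` and `(t₁,s₁,τ)·(t₂,s₂,α) = (t₁t₂, s₁t₂, α)`. -/
def sdMul (x y : S × S × R2) : S × S × R2 :=
  match x, y with
  | (t₁, s₁, R2.σ), (_, s₂, α) => (t₁ * s₂, s₁ * s₂, α)
  | (t₁, s₁, R2.τ), (t₂, _, α) => (t₁ * t₂, s₁ * t₂, α)

instance : Mul (S × S × R2) := ⟨sdMul⟩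

theorem sdMul_def (x y : S × S × R2) : x * y = sdMul x y := rfl

instance : Semigroup (S × S × R2) where
  mul_assoc x y z := by
    obtain ⟨t₁, s₁, α₁⟩ := x
    obtain ⟨t₂, s₂, α₂⟩ := y
    obtain ⟨t₃, s₃, α₃⟩ := z
    cases α₁ <;> cases α₂ <;> simp [sdMul_def, sdMul, mul_assoc]

/-- The set `E = {(s,t,α) ∈ E(T*R₂) : s ∈ S¹ t}`. -/
def Eset (S : Type*) [Semigroup S] : Set (S × S × R2) :=
  {x | IsIdempotentElem x ∧ ∃ a : WithOne S, (x.1 : WithOne S) = a * (x.2.1 : WithOne S)}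

/-- `T(S)`: the subsemigroup of the semidirect product generated by `E`. -/
def TS (S : Type*) [Semigroup S] : Subsemigroup (S × S × R2) :=
  Subsemigroup.closure (Eset S)

/-- Green's `𝓛` is a right congruence. -/
theorem greenL_mul_right {S : Type*} [Semigroup S] {a b : S} (hab : greenL a b) (c : S) :
    greenL (a * c) (b * c) := by
  have key : ∀ {a b : S}, greenL a b → ∀ x : WithOne S,
      (∃ u : WithOne S, x = u * ((a * c : S) : WithOne S)) →
      (∃ u : WithOne S, x = u * ((b * c : S) : WithOne S)) := by
    intro a b hab x hx
    obtain ⟨u, rfl⟩ := hx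
    have h1 : (u * (a : WithOne S)) ∈
        {x : WithOne S | ∃ u : WithOne S, x = u * (a : WithOne S)} := ⟨u, rfl⟩
    rw [greenL] at hab
    rw [hab] at h1
    obtain ⟨w, hw⟩ := h1
    refine ⟨w, ?_⟩
    rw [WithOne.coe_mul, WithOne.coe_mul, ← mul_assoc, hw, mul_assoc]
  have hab' : greenL b a := hab.symm
  ext x
  exact ⟨key hab x, key hab' x⟩

/-- `R(S) = {(s,t,α) ∈ T(S) : s 𝓛 t}`, a subsemigroup of `T(S)`. -/
def RS (S : Type*) [Semigroup S] : Subsemigroup ↥(TS S) where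
  carrier := {x | greenL (x : S × S × R2).1 (x : S × S × R2).2.1}
  mul_mem' := by
    rintro ⟨⟨s, t, α⟩, hx⟩ ⟨⟨u, v, β⟩, hy⟩ hxs hys
    simp only [Set.mem_setOf_eq] at hxs hys ⊢
    cases α <;> exact greenL_mul_right hxs _

end SemidirectProduct


/-- description of the set `E` for an idempotent covered semigroup. -/
theorem statement_1 {S : Type*} [Semigroup S] (hS : IdemCovered S) :
    Eset S =
      {x : S × S × R2 | ∃ s e : S, IsIdempotentElem e ∧ s * e = s ∧ x = (s, e, R2.σ)} ∪
      {x : S × S × R2 | ∃ s e : S, IsIdempotentElem e ∧ greenL e s ∧ x = (e, s, R2.τ)} := by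
  ext ⟨s, t, α⟩
  cases α
  · constructor
    · rintro ⟨h, -⟩
      have h' : (s * t, t * t, R2.σ) = (s, t, R2.σ) := h
      simp only [Prod.mk.injEq, and_true] at h'
      exact Or.inl ⟨s, t, h'.2, h'.1, rfl⟩
    · rintro (⟨s', e, he, hse, hx⟩ | ⟨s', e, he, hse, hx⟩)
      · simp only [Prod.mk.injEq, and_true] at hx
        obtain ⟨rfl, rfl⟩ := hx
        refine ⟨?_, (s : WithOne S), ?_⟩
        · change (s * t, t * t, R2.σ) = (s, t, R2.σ)
          rw [hse, he.eq]
        · change (s : WithOne S) = (s : WithOne S) * (t : WithOne S)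
          rw [← WithOne.coe_mul, hse]
      · simp at hx
  · constructor
    · rintro ⟨h, a, ha⟩
      have h' : (s * s, t * s, R2.τ) = (s, t, R2.τ) := h
      simp only [Prod.mk.injEq, and_true] at h'
      change (s : WithOne S) = a * (t : WithOne S) at ha
      refine Or.inr ⟨t, s, h'.1, ?_, rfl⟩
      have ht : (t : WithOne S) = (t : WithOne S) * (s : WithOne S) := by
        rw [← WithOne.coe_mul, h'.2]
      ext x
      constructor
      · rintro ⟨u, rfl⟩
        exact ⟨u * a, by rw [mul_assoc, ← ha]⟩
      · rintro ⟨u, rfl⟩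
        exact ⟨u * t, by rw [mul_assoc, ← ht]⟩
    · rintro (⟨s', e, he, hse, hx⟩ | ⟨s', e, he, hse, hx⟩)
      · simp at hx
      · simp only [Prod.mk.injEq, and_true] at hx
        obtain ⟨rfl, rfl⟩ := hx
        have h1 : (s : WithOne S) ∈
            {x : WithOne S | ∃ u : WithOne S, x = u * (t : WithOne S)} :=
          hse.subset ⟨1, (one_mul _).symm⟩
        have h2 : (t : WithOne S) ∈
            {x : WithOne S | ∃ u : WithOne S, x = u * (s : WithOne S)} :=
          hse.superset ⟨1, (one_mul _).symm⟩
        refine ⟨?_, h1⟩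
        obtain ⟨u, hu⟩ := h2
        have hts : t * s = t := by
          apply WithOne.coe_injective
          rw [WithOne.coe_mul, hu, mul_assoc, ← WithOne.coe_mul, he.eq]
        change (s * s, t * s, R2.τ) = (s, t, R2.τ)
        rw [hts, he.eq]

end SemibandEmbed
end

section
/- Let S be an idempotent covered semigroup. Then T(S) = {(s,t,α) ∈ S × S × R₂ : s ∈ S¹t}; every element of T(S) is a product of at most 4 elements of E; and the set of idempotents of T(S) equals E. -/
namespace SemibandEmbed

theorem TS_sub {S : Type*} [Semigroup S] (x : S × S × R2) (hx : x ∈ TS S) :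
    ∃ a : WithOne S, (x.1 : WithOne S) = a * (x.2.1 : WithOne S) := by
  refine Subsemigroup.closure_induction
    (p := fun x _ => ∃ a : WithOne S, (x.1 : WithOne S) = a * (x.2.1 : WithOne S))
    (fun x h => h.2) ?_ hx
  rintro ⟨s, t, α⟩ ⟨u, v, β⟩ _ _ ⟨a, ha⟩ _
  refine ⟨a, ?_⟩
  cases α <;> simp only [sdMul_def, sdMul, WithOne.coe_mul] at ha ⊢ <;> rw [ha, mul_assoc]

theorem mem_E_sig {S : Type*} [Semigroup S] (x f : S) (hf : f * f = f) (hx : x * f = x) :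
    (x, f, R2.σ) ∈ Eset S := by
  refine ⟨?_, (x : WithOne S), ?_⟩
  · simp [IsIdempotentElem, sdMul_def, sdMul, hf, hx]
  · simp only [← WithOne.coe_mul, hx]

theorem mem_E_tau {S : Type*} [Semigroup S] (f : S) (hf : f * f = f) :
    (f, f, R2.τ) ∈ Eset S := by
  refine ⟨?_, 1, ?_⟩
  · simp [IsIdempotentElem, sdMul_def, sdMul, hf]
  · simp

theorem four {S : Type*} [Semigroup S] (hS : IdemCovered S) (x : S × S × R2)
    (hx : ∃ a : WithOne S, (x.1 : WithOne S) = a * (x.2.1 : WithOne S)) :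
    ∃ e₁ e₂ e₃ e₄ : S × S × R2, e₁ ∈ Eset S ∧ e₂ ∈ Eset S ∧ e₃ ∈ Eset S ∧
        e₄ ∈ Eset S ∧ x = e₁ * e₂ * e₃ * e₄ := by
  obtain ⟨s, t, α⟩ := x
  obtain ⟨e, f, he, hf, hte, hft⟩ := hS t
  have he' : e * e = e := he
  have hf' : f * f = f := hf
  have key : ∃ b : S, b * f = b ∧ b * t = s := by
    obtain ⟨a, ha⟩ := hx
    refine WithOne.cases_on (P := fun a => ((s : WithOne S) = a * (t : WithOne S)) → _) a ?_ ?_ ha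
    · intro ha
      simp only [one_mul, WithOne.coe_inj] at ha
      exact ⟨f, hf, by rw [hft, ha]⟩
    · intro a ha
      simp only [← WithOne.coe_mul, WithOne.coe_inj] at ha
      exact ⟨a * f, by rw [mul_assoc, hf'], by rw [mul_assoc, hft, ha]⟩
  obtain ⟨b, hb, rfl⟩ := key
  have hbt : b * t * e = b * t := by rw [mul_assoc, hte]
  cases α
  · refine ⟨_, _, _, _, mem_E_sig b f hf' hb, mem_E_tau f hf', mem_E_sig t e he' hte,
      mem_E_sig e e he' he', ?_⟩
    simp only [sdMul_def, sdMul, hb, hf', hft, hte, hbt]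
  · refine ⟨_, _, _, _, mem_E_sig b f hf' hb, mem_E_tau f hf', mem_E_sig t e he' hte,
      mem_E_tau e he', ?_⟩
    simp only [sdMul_def, sdMul, hb, hf', hft, hte, hbt]

/-- `T(S) = {(s,t,α) : s ∈ S¹t}` is a semiband of depth 4 with `E(T(S)) = E`. -/
theorem statement_2 {S : Type*} [Semigroup S] (hS : IdemCovered S) :
    (TS S : Set (S × S × R2)) =
        {x : S × S × R2 | ∃ a : WithOne S, (x.1 : WithOne S) = a * (x.2.1 : WithOne S)} ∧
    (∀ x ∈ TS S, ∃ e₁ e₂ e₃ e₄ : S × S × R2, e₁ ∈ Eset S ∧ e₂ ∈ Eset S ∧ e₃ ∈ Eset S ∧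
        e₄ ∈ Eset S ∧ x = e₁ * e₂ * e₃ * e₄) ∧
    {x : S × S × R2 | x ∈ TS S ∧ IsIdempotentElem x} = Eset S := by
  refine ⟨?_, fun x hx => four hS x (TS_sub x hx), ?_⟩
  · ext x
    refine ⟨fun hx => TS_sub x hx, fun hx => ?_⟩
    obtain ⟨e₁, e₂, e₃, e₄, h₁, h₂, h₃, h₄, rfl⟩ := four hS x hx
    have h := fun {y} (hy : y ∈ Eset S) => (Subsemigroup.subset_closure hy : y ∈ TS S)
    exact mul_mem (mul_mem (mul_mem (h h₁) (h h₂)) (h h₃)) (h h₄)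
  · ext x
    exact ⟨fun hx => ⟨hx.2, TS_sub x hx.1⟩, fun hx => ⟨Subsemigroup.subset_closure hx, hx.1⟩⟩

end SemibandEmbed
end

section
/- Let S be an idempotent covered semigroup. Then the map φ : S → T(S) defined by s ↦ (s,s,σ) is an injective semigroup homomorphism, i.e., it embeds S into the semiband T(S). -/
namespace SemibandEmbed

/-- `s ↦ (s,s,σ)` embeds `S` into the semiband `T(S)`. -/
theorem statement_3 {S : Type*} [Semigroup S] (hS : IdemCovered S) :
    ∃ φ : S → ↥(TS S), (∀ s : S, (φ s : S × S × R2) = (s, s, R2.σ)) ∧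
      (∀ s t : S, φ (s * t) = φ s * φ t) ∧ Function.Injective φ := by
  have hmem : ∀ s : S, ((s, s, R2.σ) : S × S × R2) ∈ TS S := by
    intro s
    obtain ⟨e, f, he, hf, hse, hfs⟩ := hS s
    have h1 : ((f, f, R2.τ) : S × S × R2) ∈ TS S := by
      apply Subsemigroup.subset_closure
      refine ⟨?_, 1, by simp⟩
      change sdMul _ _ = _
      simp [sdMul, hf.eq]
    have h2 : ((s, e, R2.σ) : S × S × R2) ∈ TS S := by
      apply Subsemigroup.subset_closure
      refine ⟨?_, (s : WithOne S), ?_⟩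
      · change sdMul _ _ = _
        simp [sdMul, he.eq, hse]
      · change (s : WithOne S) = (s : WithOne S) * (e : WithOne S)
        rw [← WithOne.coe_mul, hse]
    have h3 := (TS S).mul_mem h1 h2
    have h4 : ((f, f, R2.τ) : S × S × R2) * (s, e, R2.σ) = (s, s, R2.σ) := by
      simp [sdMul_def, sdMul, hfs]
    rwa [h4] at h3
  refine ⟨fun s => ⟨(s, s, R2.σ), hmem s⟩, fun _ => rfl, fun s t => rfl, ?_⟩
  intro s t h
  exact congrArg (fun x : ↥(TS S) => (x : S × S × R2).1) h

end SemibandEmbed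
end

section
/- An idempotent covered semigroup S is periodic (every element generates a finite monogenic subsemigroup, i.e., for every a ∈ S there exist positive integers m < n with aᵐ = aⁿ) if and only if the semiband T(S) is periodic. -/
namespace SemibandEmbed

/-- `pw a n = a ^ (n + 1)`. -/
def pw {M : Type*} [Semigroup M] (a : M) : ℕ → M
  | 0 => a
  | n + 1 => pw a n * a

theorem coe_pw {M : Type*} [Semigroup M] (a : M) (n : ℕ) :
    (a : WithOne M) ^ (n + 1) = (pw a n : M) := by
  induction n with
  | zero => simp [pw]
  | succ n ih => rw [pow_succ, ih, pw, WithOne.coe_mul]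

theorem isPeriodic_iff (M : Type*) [Semigroup M] :
    IsPeriodic M ↔ ∀ a : M, ∃ i j : ℕ, i < j ∧ pw a i = pw a j := by
  constructor
  · intro h a
    obtain ⟨m, n, hm, hmn, e⟩ := h a
    obtain ⟨i, rfl⟩ : ∃ i, m = i + 1 := ⟨m - 1, by omega⟩
    obtain ⟨j, rfl⟩ : ∃ j, n = j + 1 := ⟨n - 1, by omega⟩
    rw [coe_pw, coe_pw] at e
    exact ⟨i, j, by omega, WithOne.coe_injective e⟩
  · intro h a
    obtain ⟨i, j, hij, e⟩ := h a
    exact ⟨i + 1, j + 1, by omega, by omega, by rw [coe_pw, coe_pw, e]⟩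

theorem sub_pw {M : Type*} [Semigroup M] (T : Subsemigroup M) (y : T) (n : ℕ) :
    ((pw y n : T) : M) = pw (y : M) n := by
  induction n with
  | zero => rfl
  | succ n ih => rw [pw, pw, ← ih]; rfl

theorem pw_sigma {S : Type*} [Semigroup S] (t s : S) (n : ℕ) :
    pw ((t, s, R2.σ) : S × S × R2) (n + 1) = (t * pw s n, pw s (n + 1), R2.σ) := by
  induction n with
  | zero => rfl
  | succ n ih => rw [pw, ih, sdMul_def]; simp [sdMul, pw, mul_assoc]

theorem pw_tau {S : Type*} [Semigroup S] (t s : S) (n : ℕ) :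
    pw ((t, s, R2.τ) : S × S × R2) (n + 1) = (pw t (n + 1), s * pw t n, R2.τ) := by
  induction n with
  | zero => rfl
  | succ n ih => rw [pw, ih, sdMul_def]; simp [sdMul, pw, mul_assoc]

theorem diag_mem {S : Type*} [Semigroup S] (hS : IdemCovered S) (a : S) :
    ((a, a, R2.σ) : S × S × R2) ∈ TS S := by
  obtain ⟨e, f, he, hf, hae, hfa⟩ := hS a
  have h1 : ((f, f, R2.τ) : S × S × R2) ∈ TS S := by
    refine Subsemigroup.subset_closure ⟨?_, 1, by simp⟩
    change (f * f, f * f, R2.τ) = (f, f, R2.τ)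
    rw [hf.eq]
  have h2 : ((a, e, R2.σ) : S × S × R2) ∈ TS S := by
    refine Subsemigroup.subset_closure ⟨?_, (a : WithOne S), ?_⟩
    · change (a * e, e * e, R2.σ) = (a, e, R2.σ)
      rw [hae, he.eq]
    · change (a : WithOne S) = (a : WithOne S) * (e : WithOne S)
      rw [← WithOne.coe_mul, hae]
  have h3 := (TS S).mul_mem h1 h2
  have h4 : ((f, f, R2.τ) : S × S × R2) * (a, e, R2.σ) = (a, a, R2.σ) := by
    change (f * a, f * a, R2.σ) = (a, a, R2.σ)
    rw [hfa]
  rwa [h4] at h3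

/-- `S` is periodic iff `T(S)` is periodic. -/
theorem statement_5 {S : Type*} [Semigroup S] (hS : IdemCovered S) :
    IsPeriodic S ↔ IsPeriodic ↥(TS S) := by
  rw [isPeriodic_iff, isPeriodic_iff]
  constructor
  · rintro h ⟨⟨t, s, α⟩, hx⟩
    cases α
    · obtain ⟨i, j, hij, e⟩ := h s
      refine ⟨i + 1, j + 1, by omega, Subtype.ext ?_⟩
      rw [sub_pw, sub_pw, pw_sigma, pw_sigma, pw, pw, e]
    · obtain ⟨i, j, hij, e⟩ := h t
      refine ⟨i + 1, j + 1, by omega, Subtype.ext ?_⟩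
      rw [sub_pw, sub_pw, pw_tau, pw_tau, pw, pw, e]
  · intro h a
    obtain ⟨i, j, hij, e⟩ := h ⟨_, diag_mem hS a⟩
    have e2 := congrArg (fun z => ((z * ⟨_, diag_mem hS a⟩ : TS S) : S × S × R2)) e
    change ((pw _ (i + 1) : TS S) : S × S × R2) = ((pw _ (j + 1) : TS S) : S × S × R2) at e2
    rw [sub_pw, sub_pw, pw_sigma, pw_sigma] at e2
    exact ⟨i + 1, j + 1, by omega, congrArg (fun z => z.2.1) e2⟩

end SemibandEmbed
end

section
/- Let S be an idempotent covered semigroup and let (s,t,α), (u,v,β) ∈ T(S). Then (s,t,α) 𝓛 (u,v,β) in T(S) if and only if α = β and t 𝓛 v in S. -/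
namespace SemibandEmbed

theorem fst_mem_of_TS {S : Type*} [Semigroup S] {x : S × S × R2} (hx : x ∈ TS S) :
    ∃ a : WithOne S, (x.1 : WithOne S) = a * (x.2.1 : WithOne S) := by
  unfold TS at hx
  induction hx using Subsemigroup.closure_induction with
  | mem x h => exact h.2
  | mul x y _ _ hx hy =>
    obtain ⟨s, t, α⟩ := x
    obtain ⟨u, v, β⟩ := y
    obtain ⟨a, ha⟩ := hx
    simp only at ha
    refine ⟨a, ?_⟩
    cases α
    · change ((s * v : S) : WithOne S) = a * ((t * v : S) : WithOne S)
      rw [WithOne.coe_mul, WithOne.coe_mul, ha, mul_assoc]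
    · change ((s * u : S) : WithOne S) = a * ((t * u : S) : WithOne S)
      rw [WithOne.coe_mul, WithOne.coe_mul, ha, mul_assoc]

theorem idem_mem_TS {S : Type*} [Semigroup S] {p q : S} (hq : q * q = q) (hp : p * q = p) :
    ((p, q, R2.σ) : S × S × R2) ∈ TS S := by
  refine Subsemigroup.subset_closure ⟨?_, (p : WithOne S), ?_⟩
  · change ((p * q, q * q, R2.σ) : S × S × R2) = _
    rw [hq, hp]
  · change (p : WithOne S) = (p : WithOne S) * (q : WithOne S)
    rw [← WithOne.coe_mul, hp]

theorem diag_mem_TS {S : Type*} [Semigroup S] (hS : IdemCovered S) (c : S) :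
    ((c, c, R2.σ) : S × S × R2) ∈ TS S := by
  obtain ⟨e, f, he, hf, hce, hfc⟩ := hS c
  have h1 : ((f, f, R2.τ) : S × S × R2) ∈ TS S := by
    refine Subsemigroup.subset_closure ⟨?_, 1, ?_⟩
    · change ((f * f, f * f, R2.τ) : S × S × R2) = _
      rw [hf.eq]
    · rw [one_mul]
  have h2 := (TS S).mul_mem h1 (idem_mem_TS he.eq hce)
  change ((f * c, f * c, R2.σ) : S × S × R2) ∈ TS S at h2
  rwa [hfc] at h2

theorem mul_mem_TS {S : Type*} [Semigroup S] (hS : IdemCovered S) (d c : S) :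
    ((d * c, c, R2.σ) : S × S × R2) ∈ TS S := by
  obtain ⟨e, f, he, hf, hce, hfc⟩ := hS c
  have h2 := (TS S).mul_mem
    (idem_mem_TS (p := d * f) hf.eq (by rw [mul_assoc, hf.eq])) (diag_mem_TS hS c)
  change ((d * f * c, f * c, R2.σ) : S × S × R2) ∈ TS S at h2
  rwa [mul_assoc, hfc] at h2

theorem greenL_iff {S : Type*} [Semigroup S] (a b : S) : greenL a b ↔
    (∃ w : WithOne S, (a : WithOne S) = w * b) ∧ (∃ w : WithOne S, (b : WithOne S) = w * a) := by
  constructor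
  · intro h
    constructor
    · have : (a : WithOne S) ∈ {x : WithOne S | ∃ u : WithOne S, x = u * (a : WithOne S)} :=
        ⟨1, (one_mul _).symm⟩
      rw [h] at this
      exact this
    · have : (b : WithOne S) ∈ {x : WithOne S | ∃ u : WithOne S, x = u * (b : WithOne S)} :=
        ⟨1, (one_mul _).symm⟩
      rw [← h] at this
      exact this
  · rintro ⟨⟨w, hw⟩, ⟨z, hz⟩⟩
    ext x
    constructor
    · rintro ⟨y, rfl⟩
      exact ⟨y * w, by rw [hw, mul_assoc]⟩
    · rintro ⟨y, rfl⟩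
      exact ⟨y * z, by rw [hz, mul_assoc]⟩

theorem le_forward {S : Type*} [Semigroup S]
    (s t u v : S) (α β : R2)
    (hx : ((s, t, α) : S × S × R2) ∈ TS S) (hy : ((u, v, β) : S × S × R2) ∈ TS S)
    (h : ∃ w : WithOne ↥(TS S), ((⟨(s, t, α), hx⟩ : ↥(TS S)) : WithOne ↥(TS S)) =
      w * ((⟨(u, v, β), hy⟩ : ↥(TS S)) : WithOne ↥(TS S))) :
    α = β ∧ ∃ w : WithOne S, (t : WithOne S) = w * v := by
  obtain ⟨w, hw⟩ := h
  induction w using WithOne.recOneCoe with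
  | one =>
    rw [one_mul, WithOne.coe_inj, Subtype.mk.injEq, Prod.mk.injEq, Prod.mk.injEq] at hw
    exact ⟨hw.2.2, 1, by rw [one_mul, hw.2.1]⟩
  | coe w =>
    rw [← WithOne.coe_mul, WithOne.coe_inj] at hw
    have hw' := congrArg Subtype.val hw
    obtain ⟨⟨a, b, γ⟩, hm⟩ := w
    cases γ
    · change ((s, t, α) : S × S × R2) = (a * v, b * v, β) at hw'
      rw [Prod.mk.injEq, Prod.mk.injEq] at hw'
      exact ⟨hw'.2.2, b, by rw [hw'.2.1, WithOne.coe_mul]⟩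
    · change ((s, t, α) : S × S × R2) = (a * u, b * u, β) at hw'
      rw [Prod.mk.injEq, Prod.mk.injEq] at hw'
      obtain ⟨c, hc⟩ := fst_mem_of_TS hy
      simp only at hc
      exact ⟨hw'.2.2, b * c, by rw [hw'.2.1, WithOne.coe_mul, hc, mul_assoc]⟩

theorem le_backward {S : Type*} [Semigroup S] (hS : IdemCovered S)
    (s t u v : S) (α : R2)
    (hx : ((s, t, α) : S × S × R2) ∈ TS S) (hy : ((u, v, α) : S × S × R2) ∈ TS S)
    (h : ∃ w : WithOne S, (t : WithOne S) = w * v) :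
    ∃ w : WithOne ↥(TS S), ((⟨(s, t, α), hx⟩ : ↥(TS S)) : WithOne ↥(TS S)) =
      w * ((⟨(u, v, α), hy⟩ : ↥(TS S)) : WithOne ↥(TS S)) := by
  have h1 : ∃ c : S, t = c * v := by
    obtain ⟨w, hw⟩ := h
    induction w using WithOne.recOneCoe with
    | one =>
      rw [one_mul, WithOne.coe_inj] at hw
      obtain ⟨e, f, he, hf, hce, hfc⟩ := hS v
      exact ⟨f, by rw [hw, hfc]⟩
    | coe c => exact ⟨c, by rwa [← WithOne.coe_mul, WithOne.coe_inj] at hw⟩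
  obtain ⟨c, hc⟩ := h1
  have h2 : ∃ a : S, s = a * v ∧ ((a, c, R2.σ) : S × S × R2) ∈ TS S := by
    obtain ⟨d, hd⟩ := fst_mem_of_TS hx
    simp only at hd
    induction d using WithOne.recOneCoe with
    | one =>
      rw [one_mul, WithOne.coe_inj] at hd
      exact ⟨c, by rw [hd, hc], diag_mem_TS hS c⟩
    | coe d =>
      rw [← WithOne.coe_mul, WithOne.coe_inj] at hd
      exact ⟨d * c, by rw [hd, hc, mul_assoc], mul_mem_TS hS d c⟩
  obtain ⟨a, ha, hm⟩ := h2
  refine ⟨((⟨(a, c, R2.σ), hm⟩ : ↥(TS S)) : WithOne ↥(TS S)), ?_⟩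
  rw [← WithOne.coe_mul, WithOne.coe_inj]
  apply Subtype.ext
  change ((s, t, α) : S × S × R2) = (a * v, c * v, α)
  rw [← ha, ← hc]

/-- description of Green's relation 𝓛 on `T(S)`. -/
theorem statement_8 {S : Type*} [Semigroup S] (hS : IdemCovered S)
    (s t u v : S) (α β : R2)
    (hx : ((s, t, α) : S × S × R2) ∈ TS S) (hy : ((u, v, β) : S × S × R2) ∈ TS S) :
    greenL (⟨(s, t, α), hx⟩ : ↥(TS S)) ⟨(u, v, β), hy⟩ ↔ α = β ∧ greenL t v := by
  rw [greenL_iff, greenL_iff]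
  constructor
  · rintro ⟨h1, h2⟩
    have h3 := le_forward _ _ _ _ _ _ _ _ h1
    have h4 := le_forward _ _ _ _ _ _ _ _ h2
    exact ⟨h3.1, h3.2, h4.2⟩
  · rintro ⟨rfl, h1, h2⟩
    exact ⟨le_backward hS _ _ _ _ _ _ _ h1, le_backward hS _ _ _ _ _ _ _ h2⟩

end SemibandEmbed
end

section
/- Let S be an idempotent covered semigroup and let (s,t,α), (u,v,β) ∈ T(S). Then (s,t,α) 𝓙 (u,v,β) in T(S) if and only if t 𝓙 v in S. -/
namespace SemibandEmbed

theorem aux_cases {M : Type*} {P : WithOne M → Prop} (one : P 1)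
    (coe : ∀ a : M, P (a : WithOne M)) (x : WithOne M) : P x :=
  WithOne.cases_on x one coe

theorem aux_greenJ_iff {M : Type*} [Semigroup M] (a b : M) : greenJ a b ↔
    (∃ u v : WithOne M, (a : WithOne M) = u * b * v) ∧
    (∃ u v : WithOne M, (b : WithOne M) = u * a * v) := by
  constructor
  · intro h
    constructor
    · have : (a : WithOne M) ∈ {x : WithOne M | ∃ u v : WithOne M, x = u * (a : WithOne M) * v} :=
        ⟨1, 1, by simp⟩
      rw [greenJ] at h
      rw [h] at this
      exact this
    · have : (b : WithOne M) ∈ {x : WithOne M | ∃ u v : WithOne M, x = u * (b : WithOne M) * v} :=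
        ⟨1, 1, by simp⟩
      rw [greenJ] at h
      rw [← h] at this
      exact this
  · rintro ⟨⟨u, v, h1⟩, ⟨w, z, h2⟩⟩
    ext x
    constructor
    · rintro ⟨p, q, rfl⟩
      exact ⟨p * u, v * q, by rw [h1]; simp only [mul_assoc]⟩
    · rintro ⟨p, q, rfl⟩
      exact ⟨p * w, z * q, by rw [h2]; simp only [mul_assoc]⟩

theorem aux_left {S : Type*} [Semigroup S] (hS : IdemCovered S) (u : WithOne S) (b : S) :
    ∃ p : S, u * (b : WithOne S) = ((p * b : S) : WithOne S) := by
  obtain ⟨e, f, _, _, _, hf⟩ := hS b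
  induction u using aux_cases with
  | one => exact ⟨f, by rw [hf, one_mul]⟩
  | coe p => exact ⟨p, by rw [WithOne.coe_mul]⟩

theorem aux_right {S : Type*} [Semigroup S] (hS : IdemCovered S) (u : WithOne S) (b : S) :
    ∃ p : S, (b : WithOne S) * u = ((b * p : S) : WithOne S) := by
  obtain ⟨e, f, _, _, he, _⟩ := hS b
  induction u using aux_cases with
  | one => exact ⟨e, by rw [he, mul_one]⟩
  | coe p => exact ⟨p, by rw [WithOne.coe_mul]⟩

theorem aux_mem_diag {S : Type*} [Semigroup S] (hS : IdemCovered S) (p : S) (α : R2) :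
    ((p, p, α) : S × S × R2) ∈ TS S := by
  obtain ⟨e, f, he, hf, hpe, hfp⟩ := hS p
  have h1 : ((f, f, R2.τ) : S × S × R2) ∈ TS S := by
    apply Subsemigroup.subset_closure
    refine ⟨?_, 1, by simp⟩
    simp [IsIdempotentElem, sdMul_def, sdMul, hf.eq]
  have h2 : ((p, e, R2.σ) : S × S × R2) ∈ TS S := by
    apply Subsemigroup.subset_closure
    refine ⟨?_, (p : WithOne S), ?_⟩
    · simp [IsIdempotentElem, sdMul_def, sdMul, he.eq, hpe]
    · simp only [← WithOne.coe_mul, hpe]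
  have h3 : ((p, p, R2.σ) : S × S × R2) ∈ TS S := by
    have := (TS S).mul_mem h1 h2
    simpa [sdMul_def, sdMul, hfp] using this
  cases α with
  | σ => exact h3
  | τ =>
    have h4 : ((e, e, R2.τ) : S × S × R2) ∈ TS S := by
      apply Subsemigroup.subset_closure
      refine ⟨?_, 1, by simp⟩
      simp [IsIdempotentElem, sdMul_def, sdMul, he.eq]
    have := (TS S).mul_mem h3 h4
    simpa [sdMul_def, sdMul, hpe] using this

theorem aux_mem {S : Type*} [Semigroup S] (hS : IdemCovered S) (a p : S) (α : R2) :
    ((a * p, p, α) : S × S × R2) ∈ TS S := by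
  obtain ⟨e, f, he, hf, hpe, hfp⟩ := hS p
  have h1 : ((a * f, f, R2.σ) : S × S × R2) ∈ TS S := by
    apply Subsemigroup.subset_closure
    refine ⟨?_, (a : WithOne S), by simp⟩
    simp [IsIdempotentElem, sdMul_def, sdMul, hf.eq, mul_assoc]
  have := (TS S).mul_mem h1 (aux_mem_diag hS p α)
  simpa [sdMul_def, sdMul, hfp, mul_assoc] using this

theorem aux_of_mem {S : Type*} [Semigroup S] (hS : IdemCovered S) (x : S × S × R2)
    (hx : x ∈ TS S) : ∃ a : S, x.1 = a * x.2.1 := by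
  induction hx using Subsemigroup.closure_induction with
  | mem x hx =>
    obtain ⟨_, a, ha⟩ := hx
    obtain ⟨p, hp⟩ := aux_left hS a x.2.1
    exact ⟨p, WithOne.coe_injective (ha.trans hp)⟩
  | mul x y _ _ hx hy =>
    obtain ⟨a, ha⟩ := hx
    obtain ⟨x1, x2, α⟩ := x
    obtain ⟨y1, y2, β⟩ := y
    refine ⟨a, ?_⟩
    simp only at ha
    cases α <;> simp [sdMul_def, sdMul, ha, mul_assoc]

theorem aux_fwd {S : Type*} [Semigroup S] (hS : IdemCovered S) (x y : ↥(TS S))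
    (h : ∃ u v : WithOne ↥(TS S), (x : WithOne ↥(TS S)) = u * y * v) :
    ∃ u v : WithOne S, (x.1.2.1 : WithOne S) = u * (y.1.2.1 : S) * v := by
  obtain ⟨A, B, h⟩ := h
  have hA : ∃ z : ↥(TS S), A * (y : WithOne ↥(TS S)) = z ∧
      ∃ u : WithOne S, (z.1.2.1 : WithOne S) = u * (y.1.2.1 : S) := by
    induction A using aux_cases with
    | one => exact ⟨y, by simp, 1, by simp⟩
    | coe A =>
      refine ⟨A * y, by rw [WithOne.coe_mul], ?_⟩
      obtain ⟨⟨a1, a2, α⟩, hA⟩ := A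
      obtain ⟨⟨y1, y2, β⟩, hy⟩ := y
      obtain ⟨c, hc⟩ := aux_of_mem hS _ hy
      simp only at hc
      subst hc
      cases α
      · exact ⟨(a2 : WithOne S), by simp [sdMul_def, sdMul]⟩
      · exact ⟨((a2 * c : S) : WithOne S), by simp [sdMul_def, sdMul, mul_assoc]⟩
  obtain ⟨z, hz, u, hu⟩ := hA
  rw [hz] at h
  refine ⟨u, ?_⟩
  rw [← hu]
  induction B using aux_cases with
  | one =>
    rw [mul_one] at h
    rw [WithOne.coe_injective h]
    exact ⟨1, by simp⟩
  | coe B =>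
    rw [← WithOne.coe_mul] at h
    rw [WithOne.coe_injective h]
    obtain ⟨⟨a1, a2, α⟩, hz'⟩ := z
    obtain ⟨⟨b1, b2, β⟩, hB⟩ := B
    cases α
    · exact ⟨(b2 : WithOne S), by simp [sdMul_def, sdMul]⟩
    · exact ⟨(b1 : WithOne S), by simp [sdMul_def, sdMul]⟩

theorem aux_bwd {S : Type*} [Semigroup S] (hS : IdemCovered S) (x y : ↥(TS S))
    (h : ∃ u v : WithOne S, (x.1.2.1 : WithOne S) = u * (y.1.2.1 : S) * v) :
    ∃ u v : WithOne ↥(TS S), (x : WithOne ↥(TS S)) = u * y * v := by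
  obtain ⟨⟨s, t, α⟩, hx⟩ := x
  obtain ⟨⟨u, v, β⟩, hy⟩ := y
  obtain ⟨A, B, h⟩ := h
  obtain ⟨p, hp⟩ := aux_left hS A v
  obtain ⟨q, hq⟩ := aux_right hS B (p * v)
  simp only at h
  rw [hp, hq] at h
  have ht := WithOne.coe_injective h
  obtain ⟨a, ha⟩ := aux_of_mem hS _ hx
  simp only at ha
  refine ⟨((⟨(a * p, p, R2.σ), aux_mem hS a p _⟩ : ↥(TS S)) : WithOne ↥(TS S)),
    ((⟨(q, q, α), aux_mem_diag hS q α⟩ : ↥(TS S)) : WithOne ↥(TS S)), ?_⟩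
  rw [← WithOne.coe_mul, ← WithOne.coe_mul]
  congr 1
  apply Subtype.ext
  subst ha
  subst ht
  cases β <;> simp [sdMul_def, sdMul, mul_assoc]

/-- description of Green's relation 𝓙 on `T(S)`. -/
theorem statement_11 {S : Type*} [Semigroup S] (hS : IdemCovered S)
    (s t u v : S) (α β : R2)
    (hx : ((s, t, α) : S × S × R2) ∈ TS S) (hy : ((u, v, β) : S × S × R2) ∈ TS S) :
    greenJ (⟨(s, t, α), hx⟩ : ↥(TS S)) ⟨(u, v, β), hy⟩ ↔ greenJ t v := by
  rw [aux_greenJ_iff, aux_greenJ_iff]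
  constructor
  · rintro ⟨h1, h2⟩
    exact ⟨aux_fwd hS _ _ h1, aux_fwd hS _ _ h2⟩
  · rintro ⟨h1, h2⟩
    exact ⟨aux_bwd hS ⟨(s, t, α), hx⟩ ⟨(u, v, β), hy⟩ h1,
      aux_bwd hS ⟨(u, v, β), hy⟩ ⟨(s, t, α), hx⟩ h2⟩


end SemibandEmbed
end

section
/- Let S be an idempotent covered semigroup and let (s,t,α), (u,v,β) ∈ T(S). Then (s,t,α) ≤ (u,v,β) in the natural partial order of T(S) if and only if α = β, t ≤ v in the natural partial order of S, and there exists a ∈ S¹ with s = at and u = av. -/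
namespace SemibandEmbed

section
variable {S : Type*} [Semigroup S]

theorem one_or_coe (a : WithOne S) : a = 1 ∨ ∃ b : S, a = (b : WithOne S) := by
  induction a using WithOne.cases_on
  · exact Or.inl rfl
  · intro b; right
    exact Exists.intro _ rfl

theorem mulσ (a b c d : S) (α : R2) :
    ((a, b, R2.σ) : S × S × R2) * ((c, d, α) : S × S × R2) = (a * d, b * d, α) := rfl

theorem mulτ (a b c d : S) (α : R2) :
    ((a, b, R2.τ) : S × S × R2) * ((c, d, α) : S × S × R2) = (a * c, b * c, α) := rfl

theorem mem_imp (x : S × S × R2) (hx : x ∈ TS S) :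
    ∃ a : WithOne S, (x.1 : WithOne S) = a * (x.2.1 : WithOne S) := by
  induction hx using Subsemigroup.closure_induction with
  | mem x h => exact h.2
  | mul x y _ _ h1 _ =>
    obtain ⟨a, ha⟩ := h1
    obtain ⟨p, q, α⟩ := x
    obtain ⟨c, d, β⟩ := y
    refine ⟨a, ?_⟩
    cases α
    · rw [mulσ]
      simp only [WithOne.coe_mul] at ha ⊢
      rw [ha, mul_assoc]
    · rw [mulτ]
      simp only [WithOne.coe_mul] at ha ⊢
      rw [ha, mul_assoc]

theorem imp_mem (hS : IdemCovered S) (p q : S) (α : R2)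
    (h : ∃ a : WithOne S, (p : WithOne S) = a * (q : WithOne S)) :
    ((p, q, α) : S × S × R2) ∈ TS S := by
  obtain ⟨e, f, he, hf, hqe, hfq⟩ := hS q
  have idem : ∀ (g : S), g * g = g → ∀ γ : R2, ((g, g, γ) : S × S × R2) ∈ TS S := by
    intro g hg γ
    refine Subsemigroup.subset_closure ⟨?_, 1, by simp⟩
    cases γ
    · show _ * _ = _
      rw [mulσ, hg]
    · show _ * _ = _
      rw [mulτ, hg]
  have idemσ : ∀ (r g : S), g * g = g → r * g = r → ((r, g, R2.σ) : S × S × R2) ∈ TS S := by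
    intro r g hg hr
    refine Subsemigroup.subset_closure ⟨?_, (r : WithOne S), ?_⟩
    · show _ * _ = _
      rw [mulσ, hg, hr]
    · show (r : WithOne S) = (r : WithOne S) * (g : WithOne S)
      rw [← WithOne.coe_mul, hr]
  have hp : ∃ r : S, r * f = r ∧ r * q = p := by
    obtain ⟨a, ha⟩ := h
    rcases one_or_coe a with rfl | ⟨a, rfl⟩
    · rw [one_mul, WithOne.coe_inj] at ha
      exact ⟨f, hf, by rw [hfq, ha]⟩
    · rw [← WithOne.coe_mul, WithOne.coe_inj] at ha
      refine ⟨a * f, ?_, ?_⟩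
      · rw [mul_assoc, hf.eq]
      · rw [mul_assoc, hfq, ha]
  obtain ⟨r, hrf, hrq⟩ := hp
  have h1 := (TS S).mul_mem ((TS S).mul_mem ((TS S).mul_mem (idemσ r f hf hrf)
    (idem f hf R2.τ)) (idemσ q e he hqe)) (idem e he α)
  have hpe : p * e = p := by rw [← hrq, mul_assoc, hqe]
  rw [mulσ, mulτ, mulσ, hrf, hf.eq, hrq, hfq, hpe, hqe] at h1
  exact h1

end

/-- description of the natural partial order on `T(S)`. -/
theorem statement_12 {S : Type*} [Semigroup S] (hS : IdemCovered S)
    (s t u v : S) (α β : R2)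
    (hx : ((s, t, α) : S × S × R2) ∈ TS S) (hy : ((u, v, β) : S × S × R2) ∈ TS S) :
    natLe (⟨(s, t, α), hx⟩ : ↥(TS S)) ⟨(u, v, β), hy⟩ ↔
      α = β ∧ natLe t v ∧ ∃ a : WithOne S, (s : WithOne S) = a * (t : WithOne S) ∧
        (u : WithOne S) = a * (v : WithOne S) := by
  constructor
  · rintro ⟨⟨⟨x1, x2, γ⟩, hX⟩, ⟨⟨y1, y2, δ⟩, hY⟩, h1, h2, h3⟩
    have h1 : ((s, t, α) : S × S × R2) = (x1, x2, γ) * (u, v, β) := congrArg Subtype.val h1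
    have h2 : ((s, t, α) : S × S × R2) = (u, v, β) * (y1, y2, δ) := congrArg Subtype.val h2
    have h3 : ((s, t, α) : S × S × R2) = (s, t, α) * (y1, y2, δ) := congrArg Subtype.val h3
    obtain ⟨a, ha⟩ : ∃ a : WithOne S, (u : WithOne S) = a * (v : WithOne S) := mem_imp _ hy
    have hαβ : α = β := by
      cases γ
      · rw [mulσ] at h1
        simp only [Prod.mk.injEq] at h1
        exact h1.2.2
      · rw [mulτ] at h1
        simp only [Prod.mk.injEq] at h1
        exact h1.2.2
    subst hαβ
    have hw : ∃ w : S, t = w * v := by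
      cases γ
      · rw [mulσ] at h1
        simp only [Prod.mk.injEq] at h1
        exact ⟨x2, h1.2.1⟩
      · rw [mulτ] at h1
        simp only [Prod.mk.injEq] at h1
        have h4 := h1.2.1
        clear h1 h2 h3
        rcases one_or_coe a with rfl | ⟨a, rfl⟩
        · rw [one_mul, WithOne.coe_inj] at ha
          exact ⟨x2, by rw [h4, ha]⟩
        · rw [← WithOne.coe_mul, WithOne.coe_inj] at ha
          exact ⟨x2 * a, by rw [h4, ha, mul_assoc]⟩
    have hyy : ∃ y : S, s = u * y ∧ t = v * y ∧ t = t * y := by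
      cases α
      · rw [mulσ] at h2 h3
        simp only [Prod.mk.injEq] at h2 h3
        exact ⟨y2, h2.1, h2.2.1, h3.2.1⟩
      · rw [mulτ] at h2 h3
        simp only [Prod.mk.injEq] at h2 h3
        exact ⟨y1, h2.1, h2.2.1, h3.2.1⟩
    obtain ⟨w, hw⟩ := hw
    obtain ⟨y, hs, ht, hty⟩ := hyy
    refine ⟨rfl, ⟨w, y, hw, ht, hty⟩, a, ?_, ha⟩
    rw [hs, WithOne.coe_mul, ha, mul_assoc, ← WithOne.coe_mul, ← ht]
  · rintro ⟨rfl, ⟨x, y, hxv, hvy, hty⟩, a, hs, hu⟩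
    have hz : ∃ z : S, (z : WithOne S) = a * (x : WithOne S) := by
      clear hs hu
      rcases one_or_coe a with rfl | ⟨a, rfl⟩
      · exact ⟨x, by rw [one_mul]⟩
      · exact ⟨a * x, WithOne.coe_mul a x⟩
    obtain ⟨z, hz⟩ := hz
    have e1 : s = z * v := by
      rw [← WithOne.coe_inj, WithOne.coe_mul, hz, mul_assoc, ← WithOne.coe_mul, ← hxv, hs]
    have e2 : s = u * y := by
      rw [← WithOne.coe_inj, WithOne.coe_mul, hu, mul_assoc, ← WithOne.coe_mul, ← hvy, hs]
    have e3 : s = s * y := by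
      rw [← WithOne.coe_inj, WithOne.coe_mul, hs, mul_assoc, ← WithOne.coe_mul, ← hty]
    refine ⟨⟨(z, x, R2.σ), imp_mem hS z x _ ⟨a, hz⟩⟩,
      ⟨(y, y, α), imp_mem hS y y _ ⟨1, by rw [one_mul]⟩⟩, ?_, ?_, ?_⟩
    · apply Subtype.ext
      show ((s, t, α) : S × S × R2) = (z, x, R2.σ) * (u, v, α)
      rw [mulσ, ← e1, ← hxv]
    · apply Subtype.ext
      show ((s, t, α) : S × S × R2) = (u, v, α) * (y, y, α)
      cases α
      · rw [mulσ, ← e2, ← hvy]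
      · rw [mulτ, ← e2, ← hvy]
    · apply Subtype.ext
      show ((s, t, α) : S × S × R2) = (s, t, α) * (y, y, α)
      cases α
      · rw [mulσ, ← e3, ← hty]
      · rw [mulτ, ← e3, ← hty]

end SemibandEmbed
end
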